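/- Let G be a finite connected simple graph on n vertices with Laplacian matrix L, and let v be any vertex. Then det(L²(v|v)) = n · τ(G)², where L²(v|v) is the principal submatrix of L² obtained by deleting the row and column indexed by v, and τ(G) is the number of spanning trees of G. -/

import Mathlib

open Matrix Finset

/-- The number of spanning trees of a simple graph: the number of subgraphs
on the full vertex set that are trees. -/
noncomputable def spanningTreeCount {V : Type*} (G : SimpleGraph V) : ℕ :=
  Nat.card {H : G.Subgraph // H.IsSpanning ∧ H.coe.IsTree}

/-!
Let `Lᵥ` be the Laplacian with the row and column of `v` deleted. The rows of `L` sum to zero and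
`L` is symmetric, so the deleted principal submatrix of `L²` is `Lᵥ (1 + J) Lᵥ` with `J` the
all-ones matrix of order `n - 1`. Since `det (1 + J) = n`, its determinant is `n (det Lᵥ)²`
(`det_lapMatrix_sq_minor`).

That `det Lᵥ = τ(G)` (`det_lapMatrix_minor`) is the matrix-tree theorem. It is obtained without the
Cauchy–Binet formula: row `i` of `Lᵥ` is `∑ (eᵢ - eₖ)` over the neighbours `k` of `i`, with
`eᵥ = 0`, so multilinearity expands `det Lᵥ` over all functions `r` sending each `i ≠ v` to one of
its neighbours. The summand of `r` is `1` if iterating `r` leads every vertex to `v` (the matrix is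
then unitriangular for the order by depth) and `0` otherwise (the indicator of the vertices that
never reach `v` is in the kernel). The functions of the first kind are the parent functions of the
spanning trees rooted at `v` (`card_parentFun_eq`).
-/

section ParentFunctions

variable {V : Type*} {v : V}

/-- A function `r` assigning a vertex to each `i ≠ v` is rooted at `v` if iterating it leads every
vertex to `v`. This is encoded by a rank on the vertices that strictly decreases along `r`. -/
def IsRooted (r : {w : V // w ≠ v} → V) : Prop :=
  ∃ d : V → ℕ, ∀ i, d (r i) < d i

/-- The matrix with rows `eᵢ - e_{r i}`, where `e_v = 0`. -/
def parentMatrix [DecidableEq V] (r : {w : V // w ≠ v} → V) :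
    Matrix {w : V // w ≠ v} {w : V // w ≠ v} ℝ :=
  Matrix.of fun i j => (if i = j then 1 else 0) - (if r i = j then 1 else 0)

/-- Ordering the vertices by rank makes the matrix unitriangular. -/
lemma det_parentMatrix_of_isRooted [Fintype V] [DecidableEq V] {r : {w : V // w ≠ v} → V}
    (hr : IsRooted r) : (parentMatrix r).det = 1 := by
  obtain ⟨d, hd⟩ := hr
  have hT : (parentMatrix r).BlockTriangular
      (fun i : {w : V // w ≠ v} => OrderDual.toDual (d i)) := by
    intro i j hij
    have hij : d i < d j := hij
    have h1 : i ≠ j := by rintro rfl; exact lt_irrefl _ hij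
    have h2 : r i ≠ j := by intro h; have := hd i; rw [h] at this; omega
    simp [parentMatrix, h1, h2]
  rw [hT.det]
  refine Finset.prod_eq_one fun k _ => ?_
  have : (parentMatrix r).toSquareBlock
      (fun i : {w : V // w ≠ v} => OrderDual.toDual (d i)) k = 1 := by
    ext ⟨i, hi⟩ ⟨j, hj⟩
    have hij : d i = d j := OrderDual.toDual.injective (hi.trans hj.symm)
    have h2 : r i ≠ j := by intro h; have := hd i; rw [h] at this; omega
    simp [Matrix.toSquareBlock_def, parentMatrix, h2, Matrix.one_apply]
  rw [this, det_one]

/-- The indicator of the vertices that never reach `v` is in the kernel. -/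
lemma det_parentMatrix_of_not_isRooted [Fintype V] [DecidableEq V] {r : {w : V // w ≠ v} → V}
    (hr : ¬ IsRooted r) : (parentMatrix r).det = 0 := by
  classical
  -- The extension of `r` that fixes `v`, so that it can be iterated.
  let F : V → V := fun x => if h : x ≠ v then r ⟨x, h⟩ else v
  have hF : ∀ i : {w : V // w ≠ v}, F i = r i := fun i => dif_pos i.2
  have hstep : ∀ i : {w : V // w ≠ v},
      (∃ k, F^[k] i = v) ↔ ∃ k, F^[k] (r i) = v := by
    intro i
    constructor
    · rintro ⟨k, hk⟩
      cases k with
      | zero => exact absurd hk i.2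
      | succ k => exact ⟨k, by rwa [Function.iterate_succ_apply, hF] at hk⟩
    · rintro ⟨k, hk⟩
      exact ⟨k + 1, by rwa [Function.iterate_succ_apply, hF]⟩
  by_cases hall : ∀ x, ∃ k, F^[k] x = v
  · refine absurd ⟨fun x => Nat.find (hall x), fun i => ?_⟩ hr
    have hspec := Nat.find_spec (hall i)
    rcases hk : Nat.find (hall i) with _ | k
    · rw [hk] at hspec
      exact absurd hspec i.2
    · rw [hk, Function.iterate_succ_apply, hF] at hspec
      exact (Nat.find_min' (hall (r i)) hspec).trans_lt
        ((Nat.lt_succ_self k).trans_eq hk.symm)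
  · push Not at hall
    obtain ⟨x, hx⟩ := hall
    let y : V → ℝ := fun w => if ∃ k, F^[k] w = v then 0 else 1
    have hyv : y v = 0 := if_pos ⟨0, rfl⟩
    have hyr : ∀ i : {w : V // w ≠ v}, y i = y (r i) := by
      intro i
      simp only [y, hstep i]
    have hxv : x ≠ v := fun h => hx 0 h
    rw [← Matrix.exists_mulVec_eq_zero_iff]
    refine ⟨fun i => y i, fun h => ?_, ?_⟩
    · have h0 := congrFun h ⟨x, hxv⟩
      have h1 : y x = 1 := if_neg (by push Not; exact hx)
      simp only [Pi.zero_apply] at h0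
      linarith
    · ext i
      simp only [parentMatrix, Matrix.mulVec, dotProduct, Matrix.of_apply, sub_mul, ite_mul,
        one_mul, zero_mul, Finset.sum_sub_distrib, Finset.sum_ite_eq, Finset.mem_univ, if_true,
        Pi.zero_apply]
      rw [hyr i, sub_eq_zero]
      by_cases hv : r i = v
      · rw [hv, hyv, Finset.sum_eq_zero]
        intro j _
        rw [if_neg (fun h => j.2 h.symm)]
      · rw [Finset.sum_eq_single ⟨r i, hv⟩]
        · simp
        · intro j _ hj
          rw [if_neg (fun h => hj (Subtype.ext h.symm))]
        · simp

/-- The graph whose edges join each `i ≠ v` to `r i`. -/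
def parentGraph (r : {w : V // w ≠ v} → V) : SimpleGraph V :=
  SimpleGraph.fromRel fun a b => ∃ h : a ≠ v, r ⟨a, h⟩ = b

lemma IsRooted.ne {r : {w : V // w ≠ v} → V} (hr : IsRooted r) (i : {w : V // w ≠ v}) :
    (i : V) ≠ r i := by
  obtain ⟨d, hd⟩ := hr
  intro h
  have := hd i
  rw [← h] at this
  exact lt_irrefl _ this

lemma IsRooted.adj {r : {w : V // w ≠ v} → V} (hr : IsRooted r) (i : {w : V // w ≠ v}) :
    (parentGraph r).Adj i (r i) :=
  (SimpleGraph.fromRel_adj _ _ _).2 ⟨hr.ne i, Or.inl ⟨i.2, rfl⟩⟩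

/-- Connectedness is by induction on the rank; acyclicity follows since there are at most `n - 1`
edges, one for each vertex other than the root. -/
lemma IsRooted.isTree [Finite V] {r : {w : V // w ≠ v} → V} (hr : IsRooted r) :
    (parentGraph r).IsTree := by
  classical
  have := Fintype.ofFinite V
  have hconn : (parentGraph r).Connected := by
    obtain ⟨d, hd⟩ := id hr
    have hreach : ∀ n x, d x = n → (parentGraph r).Reachable x v := by
      intro n
      induction n using Nat.strong_induction_on with
      | _ n ih =>
        intro x hx
        by_cases hxv : x = v
        · rw [hxv]
        · exact (hr.adj ⟨x, hxv⟩).reachable.trans (ih _ (hx ▸ hd ⟨x, hxv⟩) _ rfl)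
    have : Nonempty V := ⟨v⟩
    exact ⟨fun x y => (hreach _ x rfl).trans (hreach _ y rfl).symm⟩
  refine SimpleGraph.isTree_iff_connected_and_card.2 ⟨hconn, ?_⟩
  refine le_antisymm ?_ hconn.card_vert_le_card_edgeSet_add_one
  have hsurj : Function.Surjective (fun i : {w : V // w ≠ v} =>
      (⟨s(↑i, r i), hr.adj i⟩ : (parentGraph r).edgeSet)) := by
    rintro ⟨e, he⟩
    induction e with
    | _ a b =>
      have hab : (parentGraph r).Adj a b := he
      rcases ((SimpleGraph.fromRel_adj _ _ _).1 hab).2 with ⟨h, hab⟩ | ⟨h, hab⟩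
      · exact ⟨⟨a, h⟩, Subtype.ext (by simp [hab])⟩
      · exact ⟨⟨b, h⟩, Subtype.ext (by simp [hab, Sym2.eq_swap])⟩
  have h1 : Nat.card (parentGraph r).edgeSet ≤ Nat.card {w : V // w ≠ v} :=
    Nat.card_le_card_of_surjective _ hsurj
  have h2 : Nat.card {w : V // w ≠ v} + 1 = Nat.card V := by
    have h3 : 0 < Fintype.card V := Fintype.card_pos_iff.2 ⟨v⟩
    have h4 : Fintype.card {w : V // w ≠ v} = Fintype.card V - 1 := Set.card_ne_eq v
    rw [Nat.card_eq_fintype_card, Nat.card_eq_fintype_card, h4]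
    omega
  omega

/-- If two rooted functions with the same graph differ at `i`, then they also differ at the
`r₂`-successor of `i`, which therefore is not `v`; this contradicts that `i` reaches `v`
under `r₂`. -/
lemma parentGraph_injective {r₁ r₂ : {w : V // w ≠ v} → V} (h₂ : IsRooted r₂)
    (h : parentGraph r₁ = parentGraph r₂) : r₁ = r₂ := by
  obtain ⟨d, hd⟩ := id h₂
  have key : ∀ n, ∀ i : {w : V // w ≠ v}, d i = n → r₁ i = r₂ i := by
    intro n
    induction n using Nat.strong_induction_on with
    | _ n ih =>
      intro i hi
      by_contra hne
      have hadj := h₂.adj i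
      rw [← h] at hadj
      rcases ((SimpleGraph.fromRel_adj _ _ _).1 hadj).2 with ⟨_, h1⟩ | ⟨hv, h1⟩
      · exact hne h1
      · -- Here `r₁ (r₂ i) = i`; agreement at `r₂ i` would give the 2-cycle `r₂ (r₂ i) = i`.
        have h3 := ih _ (hi ▸ hd i) ⟨r₂ i, hv⟩ rfl
        have h4 := hd ⟨r₂ i, hv⟩
        rw [← h3, h1] at h4
        have := hd i
        simp only at h4
        omega
  exact funext fun i => key _ i rfl

/-- A tree is the graph of the function sending each vertex to a neighbour closer to `v`. -/
lemma exists_parentGraph_eq [Finite V] {T : SimpleGraph V} (hT : T.IsTree) :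
    ∃ r : {w : V // w ≠ v} → V, (∀ i : {w : V // w ≠ v}, T.Adj i (r i)) ∧ IsRooted r ∧ parentGraph r = T := by
  have hex : ∀ i : {w : V // w ≠ v}, ∃ k, T.Adj i k ∧ T.dist k v < T.dist i v := by
    rintro ⟨i, hi⟩
    obtain ⟨p, hp⟩ := (hT.connected i v).exists_walk_length_eq_dist
    cases p with
    | nil => exact absurd rfl hi
    | cons hadj q =>
      refine ⟨_, hadj, ?_⟩
      have := SimpleGraph.dist_le q
      simp only [SimpleGraph.Walk.length_cons] at hp
      simp only
      omega
  choose r hadj hlt using hex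
  have hr : IsRooted r := ⟨fun x => T.dist x v, hlt⟩
  refine ⟨r, hadj, hr, ?_⟩
  have hle : parentGraph r ≤ T := by
    intro a b hab
    rcases ((SimpleGraph.fromRel_adj _ _ _).1 hab).2 with ⟨h, rfl⟩ | ⟨h, rfl⟩
    · exact hadj ⟨a, h⟩
    · exact (hadj ⟨b, h⟩).symm
  -- A tree is minimal among connected graphs, so it has no proper connected subgraph.
  exact le_antisymm hle
    ((SimpleGraph.isTree_iff_minimal_connected.1 hT).2 hr.isTree.connected hle)

end ParentFunctions

/-- Spanning subgraphs of `G` are the same as graphs on `V` contained in `G`. -/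
lemma spanningTreeCount_eq {V : Type*} (G : SimpleGraph V) :
    spanningTreeCount G = Nat.card {T : SimpleGraph V // T ≤ G ∧ T.IsTree} := by
  refine Nat.card_eq_of_bijective
    (fun H => ⟨H.1.spanningCoe, H.1.spanningCoe_le,
      ((H.1.spanningCoeEquivCoeOfSpanning H.2.1).isTree_iff).2 H.2.2⟩) ⟨?_, ?_⟩
  · rintro ⟨H, hH, _⟩ ⟨K, hK, _⟩ h
    have h' : H.spanningCoe = K.spanningCoe := congrArg Subtype.val h
    refine Subtype.ext (SimpleGraph.Subgraph.ext ?_ ?_)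
    · rw [SimpleGraph.Subgraph.isSpanning_iff.1 hH, SimpleGraph.Subgraph.isSpanning_iff.1 hK]
    · exact congrArg SimpleGraph.Adj h'
  · rintro ⟨T, hle, hT⟩
    have hs : (SimpleGraph.toSubgraph T hle).IsSpanning := SimpleGraph.toSubgraph.isSpanning T hle
    exact ⟨⟨SimpleGraph.toSubgraph T hle, hs,
      ((SimpleGraph.Subgraph.spanningCoeEquivCoeOfSpanning _ hs).isTree_iff).1 hT⟩, rfl⟩

/-- Rooted functions moving along edges of `G` correspond to spanning trees. -/
lemma card_parentFun_eq {V : Type*} [Finite V] (G : SimpleGraph V) (v : V) :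
    Nat.card {r : {w : V // w ≠ v} → V //
        (∀ i : {w : V // w ≠ v}, G.Adj i (r i)) ∧ IsRooted r}
      = spanningTreeCount G := by
  rw [spanningTreeCount_eq]
  refine Nat.card_eq_of_bijective (fun r => ⟨parentGraph r.1, ?_, r.2.2.isTree⟩) ⟨?_, ?_⟩
  · intro a b hab
    rcases ((SimpleGraph.fromRel_adj _ _ _).1 hab).2 with ⟨h, h'⟩ | ⟨h, h'⟩
    · exact h' ▸ r.2.1 ⟨a, h⟩
    · exact h' ▸ (r.2.1 ⟨b, h⟩).symm
  · intro r₁ r₂ h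
    exact Subtype.ext (parentGraph_injective r₂.2.2 (congrArg Subtype.val h))
  · rintro ⟨T, hle, hT⟩
    obtain ⟨r, hadj, hr, rfl⟩ := exists_parentGraph_eq (v := v) hT
    exact ⟨⟨r, fun i => hle (hadj i), hr⟩, rfl⟩

/-- The **matrix-tree theorem**. -/
theorem det_lapMatrix_minor {V : Type*} [Fintype V] [DecidableEq V]
    (G : SimpleGraph V) [DecidableRel G.Adj] (v : V) :
    ((G.lapMatrix ℝ).submatrix (fun i : {w : V // w ≠ v} => (i : V))
      (fun j : {w : V // w ≠ v} => (j : V))).det = spanningTreeCount G := by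
  classical
  have hrows : (G.lapMatrix ℝ).submatrix (fun i : {w : V // w ≠ v} => (i : V))
      (fun j : {w : V // w ≠ v} => (j : V)) = fun i : {w : V // w ≠ v} => ∑ k ∈ G.neighborFinset (i : V),
        fun j : {w : V // w ≠ v} =>
          ((if i = j then 1 else 0) - (if k = j then 1 else 0) : ℝ) := by
    ext i j
    rw [Finset.sum_apply, Finset.sum_sub_distrib]
    by_cases h : i = j
    · subst h
      simp [SimpleGraph.lapMatrix, SimpleGraph.degMatrix]
    · have h' : (i : V) ≠ j := fun e => h (Subtype.ext e)
      simp [SimpleGraph.lapMatrix, SimpleGraph.degMatrix, h, h', SimpleGraph.adjMatrix_apply]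
  have hexp := (detRowAlternating (n := {w : V // w ≠ v}) (R := ℝ)).toMultilinearMap.map_sum_finset
    (fun (i : {w : V // w ≠ v}) k => fun j : {w : V // w ≠ v} =>
          ((if i = j then 1 else 0) - (if k = (j : V) then 1 else 0) : ℝ))
    (fun i => G.neighborFinset (i : V))
  rw [hrows]
  refine hexp.trans ?_
  have hterm : ∀ r : {w : V // w ≠ v} → V, (parentMatrix r).det = if IsRooted r then 1 else 0 := by
    intro r
    split_ifs with h
    · exact det_parentMatrix_of_isRooted h
    · exact det_parentMatrix_of_not_isRooted h
  refine (Finset.sum_congr rfl fun r _ => hterm r).trans ?_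
  rw [Finset.sum_boole, ← card_parentFun_eq G v, Nat.subtype_card]
  intro r
  simp

/-- Eliminating the entries in row and column `v` of `L` through the zero row sums turns the minor
of `L²` into `Lᵥ (1 + J) Lᵥ`. -/
lemma det_lapMatrix_sq_minor {V : Type*} [Fintype V] [DecidableEq V]
    (G : SimpleGraph V) [DecidableRel G.Adj] (v : V) :
    (((G.lapMatrix ℝ * G.lapMatrix ℝ).submatrix
        (fun i : {w : V // w ≠ v} => (i : V))
        (fun j : {w : V // w ≠ v} => (j : V))).det)
      = (Fintype.card V : ℝ) * ((G.lapMatrix ℝ).submatrix (fun i : {w : V // w ≠ v} => (i : V))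
      (fun j : {w : V // w ≠ v} => (j : V))).det ^ 2 := by
  set M := (G.lapMatrix ℝ).submatrix (fun i : {w : V // w ≠ v} => (i : V))
      (fun j : {w : V // w ≠ v} => (j : V)) with hM
  have hsplit : ∀ g : V → ℝ, ∑ k, g k = g v + ∑ k : {w : V // w ≠ v}, g k := by
    intro g
    exact (Fintype.sum_eq_add_sum_subtype_ne g v)
  have hrow : ∀ i, G.lapMatrix ℝ i v = -∑ k : {w : V // w ≠ v}, G.lapMatrix ℝ i k := by
    intro i
    have h := congrFun (G.lapMatrix_mulVec_const_eq_zero (R := ℝ)) i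
    simp only [Matrix.mulVec, dotProduct, mul_one, Pi.zero_apply] at h
    rw [hsplit] at h
    linarith
  have hcol : ∀ j, G.lapMatrix ℝ v j = -∑ k : {w : V // w ≠ v}, G.lapMatrix ℝ k j := by
    intro j
    have hs := fun a b => (G.isSymm_lapMatrix (R := ℝ)).apply a b
    rw [← hs, hrow]
    simp only [hs]
  have hfac : (G.lapMatrix ℝ * G.lapMatrix ℝ).submatrix
        (fun i : {w : V // w ≠ v} => (i : V)) (fun j : {w : V // w ≠ v} => (j : V))
      = M * (1 + replicateCol Unit (fun _ => (1 : ℝ)) * replicateRow Unit (fun _ => (1 : ℝ))) * M := by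
    rw [Matrix.mul_add, Matrix.add_mul, Matrix.mul_one, ← Matrix.mul_assoc, Matrix.mul_assoc _ _ M]
    ext i j
    simp only [Matrix.submatrix_apply, Matrix.add_apply, Matrix.mul_apply, hM, replicateCol_apply,
      replicateRow_apply, mul_one, one_mul, Finset.univ_unique, Finset.sum_singleton]
    rw [hsplit, hrow, hcol]
    ring
  have hcard : (1 + Fintype.card {w : V // w ≠ v} : ℝ) = Fintype.card V := by
    have h := hsplit (fun _ => 1)
    simpa using h.symm
  rw [hfac, det_mul, det_mul, det_one_add_replicateCol_mul_replicateRow, ← hcard]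
  simp only [dotProduct, mul_one, Finset.sum_const, Finset.card_univ, nsmul_eq_mul]
  ring

/-- For a connected graph `G` on `n` vertices with Laplacian
`L` and any vertex `v`, the principal minor of `L²` obtained by deleting the
row and column of `v` equals `n · τ(G)²`. -/
theorem det_sq_lapMatrix_minor_one_vertex
    {V : Type*} [Fintype V] [DecidableEq V] {n : ℕ}
    (G : SimpleGraph V) [DecidableRel G.Adj] (hG : G.Connected)
    (hn : Fintype.card V = n) (v : V) :
    (((G.lapMatrix ℝ * G.lapMatrix ℝ).submatrix
        (fun i : {w : V // w ≠ v} => (i : V))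
        (fun j : {w : V // w ≠ v} => (j : V))).det)
      = (n : ℝ) * (spanningTreeCount G : ℝ) ^ 2 := by
  rw [det_lapMatrix_sq_minor, det_lapMatrix_minor, hn]
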